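/- Let I ⊆ ℝ be an open interval and let y : ℝ → ℝ be five times differentiable on I with y'(x) ≠ 0 for all x ∈ I, satisfying the nonlinear fifth-order ODE y'(x)³·y⁽⁵⁾(x) − 15·y'(x)²·y''(x)·y⁽⁴⁾(x) − 10·y'(x)²·y'''(x)² + 105·y'(x)·y''(x)²·y'''(x) − 105·y''(x)⁴ = 0 for all x ∈ I. Then there exist constants c₀, c₁, c₂, c₃, c₄ ∈ ℝ such that x = c₀ + c₁·y(x) + c₂·y(x)² + c₃·y(x)³ + c₄·y(x)⁴ for all x ∈ I. (This is the linearization of the fifth-order maximal-symmetry example (5.20) of Section 5 by the hodograph coordinates x̃ = y, ỹ = x, bringing it to ỹ⁽⁵⁾ = 0: the independent variable is a quartic polynomial in y along every solution.) -/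

import Mathlib

theorem const_aux (I : Set ℝ) (hI : IsOpen I ∧ I.OrdConnected) (f : ℝ → ℝ)
    (hf : ∀ x ∈ I, HasDerivAt f 0 x) : ∃ c, ∀ x ∈ I, f x = c := by
  apply hI.1.exists_is_const_of_deriv_eq_zero hI.2.isPreconnected
  · intro x hx
    exact (hf x hx).differentiableAt.differentiableWithinAt
  · intro x hx
    exact (hf x hx).deriv

/-- `y` is five times differentiable on `I`. -/
def FiveDiffOn (y : ℝ → ℝ) (I : Set ℝ) : Prop :=
  ∀ x ∈ I, DifferentiableAt ℝ y x ∧ DifferentiableAt ℝ (deriv y) x ∧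
    DifferentiableAt ℝ (deriv^[2] y) x ∧ DifferentiableAt ℝ (deriv^[3] y) x ∧
    DifferentiableAt ℝ (deriv^[4] y) x

theorem linearization_fifth_order
    (I : Set ℝ) (hI : IsOpen I ∧ I.OrdConnected)
    (y : ℝ → ℝ) (hy : FiveDiffOn y I)
    (hy' : ∀ x ∈ I, deriv y x ≠ 0)
    (hODE : ∀ x ∈ I, (deriv y x) ^ 3 * deriv^[5] y x -
      15 * (deriv y x) ^ 2 * deriv^[2] y x * deriv^[4] y x -
      10 * (deriv y x) ^ 2 * (deriv^[3] y x) ^ 2 +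
      105 * deriv y x * (deriv^[2] y x) ^ 2 * deriv^[3] y x -
      105 * (deriv^[2] y x) ^ 4 = 0) :
    ∃ c₀ c₁ c₂ c₃ c₄ : ℝ, ∀ x ∈ I,
      x = c₀ + c₁ * y x + c₂ * (y x) ^ 2 + c₃ * (y x) ^ 3 + c₄ * (y x) ^ 4 := by
  have e2 : deriv (deriv y) = deriv^[2] y := rfl
  have e3 : deriv (deriv^[2] y) = deriv^[3] y := (Function.iterate_succ_apply' deriv 2 y).symm
  have e4 : deriv (deriv^[3] y) = deriv^[4] y := (Function.iterate_succ_apply' deriv 3 y).symm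
  have e5 : deriv (deriv^[4] y) = deriv^[5] y := (Function.iterate_succ_apply' deriv 4 y).symm
  have d0 : ∀ x ∈ I, HasDerivAt y (deriv y x) x := fun x hx => (hy x hx).1.hasDerivAt
  have d1 : ∀ x ∈ I, HasDerivAt (deriv y) (deriv^[2] y x) x := fun x hx =>
    e2 ▸ (hy x hx).2.1.hasDerivAt
  have d2 : ∀ x ∈ I, HasDerivAt (deriv^[2] y) (deriv^[3] y x) x := fun x hx => by
    rw [← e3]; exact (hy x hx).2.2.1.hasDerivAt
  have d3 : ∀ x ∈ I, HasDerivAt (deriv^[3] y) (deriv^[4] y x) x := fun x hx => by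
    rw [← e4]; exact (hy x hx).2.2.2.1.hasDerivAt
  have d4 : ∀ x ∈ I, HasDerivAt (deriv^[4] y) (deriv^[5] y x) x := fun x hx => by
    rw [← e5]; exact (hy x hx).2.2.2.2.hasDerivAt
  clear e2 e3 e4 e5 hy
  generalize deriv^[5] y = t at *
  generalize deriv^[4] y = s at *
  generalize deriv^[3] y = r at *
  generalize deriv^[2] y = q at *
  generalize deriv y = p at *
  obtain ⟨k4, h4⟩ := const_aux I hI
    (fun x => (-(s x * p x ^ 2) + 10 * (p x * q x * r x) - 15 * q x ^ 3) / p x ^ 7) (by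
      intro x hx
      have hp := hy' x hx
      refine HasDerivAt.congr_deriv (((((d4 x hx).fun_mul ((d1 x hx).fun_pow 2)).fun_neg.fun_add
        ((((d1 x hx).fun_mul (d2 x hx)).fun_mul (d3 x hx)).const_mul 10)).fun_sub
        (((d2 x hx).fun_pow 3).const_mul 15)).fun_div ((d1 x hx).fun_pow 7) (pow_ne_zero 7 hp)) ?_
      have := hODE x hx
      field_simp
      push_cast
      norm_num
      linear_combination (-p x ^ 6) * this)
  obtain ⟨k3, h3⟩ := const_aux I hI
    (fun x => (-(r x * p x) + 3 * q x ^ 2) / p x ^ 5 - k4 * y x) (by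
      intro x hx
      have hp := hy' x hx
      refine HasDerivAt.congr_deriv (((((d3 x hx).fun_mul (d1 x hx)).fun_neg.fun_add
        (((d2 x hx).fun_pow 2).const_mul 3)).fun_div ((d1 x hx).fun_pow 5) (pow_ne_zero 5 hp)).fun_sub
        ((d0 x hx).const_mul k4)) ?_
      have := h4 x hx
      rw [← this]
      field_simp
      push_cast
      norm_num
      try ring)
  obtain ⟨k2, h2⟩ := const_aux I hI
    (fun x => -q x / p x ^ 3 - k4 / 2 * y x ^ 2 - k3 * y x) (by
      intro x hx
      have hp := hy' x hx
      refine HasDerivAt.congr_deriv ((((d2 x hx).fun_neg.fun_div ((d1 x hx).fun_pow 3) (pow_ne_zero 3 hp)).fun_sub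
        (((d0 x hx).fun_pow 2).const_mul (k4 / 2))).fun_sub
        ((d0 x hx).const_mul k3)) ?_
      have := h3 x hx
      rw [← this]
      field_simp
      push_cast
      norm_num
      try ring)
  obtain ⟨k1, h1⟩ := const_aux I hI
    (fun x => (p x)⁻¹ - k4 / 6 * y x ^ 3 - k3 / 2 * y x ^ 2 - k2 * y x) (by
      intro x hx
      have hp := hy' x hx
      refine HasDerivAt.congr_deriv (((((d1 x hx).fun_inv hp).fun_sub
        (((d0 x hx).fun_pow 3).const_mul (k4 / 6))).fun_sub
        (((d0 x hx).fun_pow 2).const_mul (k3 / 2))).fun_sub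
        ((d0 x hx).const_mul k2)) ?_
      have := h2 x hx
      rw [← this]
      field_simp
      push_cast
      norm_num
      try ring)
  obtain ⟨k0, h0⟩ := const_aux I hI
    (fun x => x - k4 / 24 * y x ^ 4 - k3 / 6 * y x ^ 3 - k2 / 2 * y x ^ 2 - k1 * y x) (by
      intro x hx
      have hp := hy' x hx
      refine HasDerivAt.congr_deriv (((((hasDerivAt_id' x).fun_sub
        (((d0 x hx).fun_pow 4).const_mul (k4 / 24))).fun_sub
        (((d0 x hx).fun_pow 3).const_mul (k3 / 6))).fun_sub
        (((d0 x hx).fun_pow 2).const_mul (k2 / 2))).fun_sub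
        ((d0 x hx).const_mul k1)) ?_
      have := h1 x hx
      rw [← this]
      field_simp
      push_cast
      norm_num
      try ring)
  refine ⟨k0, k1, k2 / 2, k3 / 6, k4 / 24, fun x hx => ?_⟩
  have := h0 x hx

  linear_combination this
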